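/- Let K be an abelian group and R a commutative K-graded ring without K-homogeneous zero divisors such that every nonzero K-homogeneous non-unit of R is a product of K-irreducible elements. Let S be a multiplicative system generated by K-prime elements of R. If the K-graded localization S^{-1}R is factorially K-graded, then R is factorially K-graded. -/

import Mathlib

/-!
Nagata's argument. It suffices that every `K`-irreducible `f` is `K`-prime. If some generator
`p ∈ P` of `S` divides `f`, then `f` is a unit multiple of `p` (`kPrime_of_kPrime_dvd`).
Otherwise no element of `S` shares a factor with `f`: `s ∣ f * c` forces `s ∣ c`
(`dvd_of_dvd_mul_of_mem_closure`), so `f` does not become a unit in `S⁻¹R` and `K`-primality of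
`f / 1` in `S⁻¹R` descends to `f`.
To see that `f / 1` is `K`-prime, write it as `q * y`, where `q` is one of its `K`-prime factors
and `y` is the product of the others. With `q = a / s` and `y = b / t`, the equation
`f * (s * t) = a * b` and primality of the generators allow the factors of `s * t` to be
cancelled from `a` and `b` (`exists_cancel_of_mem_closure`), giving `f = a' * b'`. As `f` is
`K`-irreducible and `q` is not a unit, `y` is a unit, so `f / 1` is a unit multiple of `q`.

Homogeneity is compatible with division throughout, since the quotient of a homogeneous element by
a homogeneous element may be chosen homogeneous (`Homog.exists_eq_mul_of_dvd`), and nonzero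
homogeneous elements are non-zero-divisors in all of `R` (`Homog.mem_nonZeroDivisors`).
-/

/-! Definitions for factorially graded rings, following B. Bechtold,
"Factorially graded rings and Cox rings". -/

section Defs

variable {K R : Type*} [CommRing R]

/-- An element is `K`-homogeneous w.r.t. the grading `𝒜` if it lies in some component. -/
def Homog (𝒜 : K → AddSubgroup R) (f : R) : Prop :=
  ∃ w, f ∈ 𝒜 w

/-- `R` has no `K`-homogeneous zero divisors: the product of two nonzero homogeneous
elements is nonzero. -/
def NoHomogZeroDivisors (𝒜 : K → AddSubgroup R) : Prop :=
  ∀ f g : R, Homog 𝒜 f → Homog 𝒜 g → f ≠ 0 → g ≠ 0 → f * g ≠ 0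

/-- A nonzero homogeneous non-unit `f` is `K`-prime if whenever it divides a product of
homogeneous elements, it divides one of the factors. -/
def KPrime (𝒜 : K → AddSubgroup R) (f : R) : Prop :=
  f ≠ 0 ∧ ¬IsUnit f ∧ Homog 𝒜 f ∧
    ∀ g h : R, Homog 𝒜 g → Homog 𝒜 h → f ∣ g * h → f ∣ g ∨ f ∣ h

/-- A nonzero homogeneous non-unit `f` is `K`-irreducible if in any factorization of `f`
into two homogeneous factors one of the factors is a unit. -/
def KIrreducible (𝒜 : K → AddSubgroup R) (f : R) : Prop :=
  f ≠ 0 ∧ ¬IsUnit f ∧ Homog 𝒜 f ∧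
    ∀ g h : R, Homog 𝒜 g → Homog 𝒜 h → f = g * h → IsUnit g ∨ IsUnit h

/-- `R` is factorially `K`-graded: every nonzero homogeneous non-unit is a product of
`K`-prime elements. -/
def FactoriallyGraded (𝒜 : K → AddSubgroup R) : Prop :=
  ∀ f : R, Homog 𝒜 f → f ≠ 0 → ¬IsUnit f →
    ∃ l : Multiset R, (∀ p ∈ l, KPrime 𝒜 p) ∧ l.prod = f

/-- `R` is `K`-noetherian: every ideal generated by homogeneous elements is generated by
finitely many homogeneous elements. -/
def KNoetherian (𝒜 : K → AddSubgroup R) : Prop :=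
  ∀ s : Set R, (∀ x ∈ s, Homog 𝒜 x) →
    ∃ t : Finset R, (∀ x ∈ t, Homog 𝒜 x) ∧ Ideal.span (t : Set R) = Ideal.span s

end Defs

section Graded

variable {K R : Type*} [AddCommGroup K] [CommRing R]

/-- The Veronese subalgebra `R_{K'} = ⊕_{w ∈ K'} R_w` (as an additive subgroup of `R`). -/
def Veronese (𝒜 : K → AddSubgroup R) (K' : AddSubgroup K) : AddSubgroup R :=
  ⨆ w ∈ K', 𝒜 w

/-- Homogeneous of some degree belonging to the subgroup `K'`. -/
def VHomog (𝒜 : K → AddSubgroup R) (K' : AddSubgroup K) (f : R) : Prop :=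
  ∃ w ∈ K', f ∈ 𝒜 w

/-- Divisibility within a subset `V` of `R` (e.g. within a Veronese subring). -/
def DvdIn (V : Set R) (f g : R) : Prop :=
  ∃ c ∈ V, g = f * c

/-- Being a unit within a subset `V` of `R` (e.g. within a Veronese subring). -/
def IsUnitIn (V : Set R) (f : R) : Prop :=
  ∃ c ∈ V, f * c = 1

/-- `f` is `K'`-prime in the Veronese subring `R_{K'}` with its `K'`-grading. -/
def VPrime (𝒜 : K → AddSubgroup R) (K' : AddSubgroup K) (f : R) : Prop :=
  f ≠ 0 ∧ ¬IsUnitIn (Veronese 𝒜 K' : Set R) f ∧ VHomog 𝒜 K' f ∧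
    ∀ g h : R, VHomog 𝒜 K' g → VHomog 𝒜 K' h →
      DvdIn (Veronese 𝒜 K' : Set R) f (g * h) →
        DvdIn (Veronese 𝒜 K' : Set R) f g ∨ DvdIn (Veronese 𝒜 K' : Set R) f h

/-- The Veronese subring `R_{K'}` is factorially `K'`-graded. -/
def VFactorial (𝒜 : K → AddSubgroup R) (K' : AddSubgroup K) : Prop :=
  ∀ f : R, VHomog 𝒜 K' f → f ≠ 0 → ¬IsUnitIn (Veronese 𝒜 K' : Set R) f →
    ∃ l : Multiset R, (∀ p ∈ l, VPrime 𝒜 K' p) ∧ l.prod = f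

/-- `R` is `K'`-associated: every homogeneous element of `R` is a homogeneous unit times an
element of the Veronese subalgebra `R_{K'}`. -/
def KAssociated (𝒜 : K → AddSubgroup R) (K' : AddSubgroup K) : Prop :=
  ∀ f : R, Homog 𝒜 f → ∃ u r : R, Homog 𝒜 u ∧ IsUnit u ∧ r ∈ Veronese 𝒜 K' ∧ f = u * r

/-- `ℬ` is the natural `K`-grading on the localization `R' = S⁻¹R`, i.e.
`(S⁻¹R)_w = { r/s : r ∈ R_{deg s + w} }`. -/
def LocGrading (𝒜 : K → AddSubgroup R) (S : Submonoid R) (R' : Type*) [CommRing R']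
    [Algebra R R'] (ℬ : K → AddSubgroup R') : Prop :=
  ∀ (w : K) (x : R'), x ∈ ℬ w ↔
    ∃ (r s : R) (v : K), s ∈ S ∧ s ∈ 𝒜 v ∧ r ∈ 𝒜 (v + w) ∧
      x * algebraMap R R' s = algebraMap R R' r

/-- The `K`-grading on the polynomial ring `R[T]` extending `𝒜`, in which `T` is
homogeneous of degree `w`: the degree-`d` part is spanned by the monomials `a·Tⁿ`
with `a ∈ R_{d - n·w}`. -/
def polyGrading (𝒜 : K → AddSubgroup R) (w : K) : K → AddSubgroup (Polynomial R) :=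
  fun d =>
    { carrier := { f : Polynomial R | ∀ n : ℕ, f.coeff n ∈ 𝒜 (d - n • w) }
      zero_mem' := by
        intro n
        rw [Polynomial.coeff_zero]
        exact zero_mem _
      add_mem' := by
        intro f g hf hg n
        rw [Polynomial.coeff_add]
        exact add_mem (hf n) (hg n)
      neg_mem' := by
        intro f hf n
        rw [Polynomial.coeff_neg]
        exact neg_mem (hf n) }

/-- The coarsened `K`-grading associated with a `K ⊕ ℤᵐ`-grading (or any grading by a
product group): the component of degree `w ∈ K` is `⊕_v R_{(w,v)}`. -/
def coarsen {V : Type*} (𝒜 : K × V → AddSubgroup R) : K → AddSubgroup R :=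
  fun w => ⨆ v : V, 𝒜 (w, v)

end Graded

section Nagata

variable {K R : Type*} [AddCommGroup K] [DecidableEq K] [CommRing R]
  {𝒜 : K → AddSubgroup R} [GradedRing 𝒜]

lemma Homog.mul {f g : R} (hf : Homog 𝒜 f) (hg : Homog 𝒜 g) : Homog 𝒜 (f * g) := by
  obtain ⟨i, hi⟩ := hf
  obtain ⟨j, hj⟩ := hg
  exact ⟨i + j, SetLike.mul_mem_graded hi hj⟩

/-- Replacing a quotient by its component of the right degree makes it homogeneous. -/
lemma Homog.exists_eq_mul_of_dvd {f g : R} (hf : Homog 𝒜 f) (hg : Homog 𝒜 g) (h : f ∣ g) :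
    ∃ c, Homog 𝒜 c ∧ g = f * c := by
  obtain ⟨i, hi⟩ := hf
  obtain ⟨j, hj⟩ := hg
  obtain ⟨c, rfl⟩ := h
  refine ⟨DirectSum.decompose 𝒜 c (j - i), ⟨j - i, SetLike.coe_mem _⟩, ?_⟩
  rw [← DirectSum.coe_decompose_mul_add_of_left_mem 𝒜 hi, add_sub_cancel,
    DirectSum.decompose_of_mem_same 𝒜 hj]

lemma Homog.mem_nonZeroDivisors (hzd : NoHomogZeroDivisors 𝒜) {f : R} (hf : Homog 𝒜 f)
    (h0 : f ≠ 0) : f ∈ nonZeroDivisors R := by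
  rw [mem_nonZeroDivisors_iff_right]
  intro c hc
  obtain ⟨i, hi⟩ := id hf
  have key : ∀ j, (DirectSum.decompose 𝒜 c j : R) = 0 := by
    intro j
    by_contra hne
    refine hzd _ _ hf ⟨j, SetLike.coe_mem _⟩ h0 hne ?_
    rw [← DirectSum.coe_decompose_mul_add_of_left_mem 𝒜 hi, mul_comm, hc]
    simp
  apply (DirectSum.decompose 𝒜).injective
  ext j
  simpa using key j

lemma kPrime_of_kPrime_dvd {f p : R} (hf : KIrreducible 𝒜 f) (hp : KPrime 𝒜 p) (h : p ∣ f) :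
    KPrime 𝒜 f := by
  obtain ⟨hf0, hfu, hfh, hfi⟩ := hf
  obtain ⟨hp0, hpu, hph, hpp⟩ := hp
  obtain ⟨c, hc, hfc⟩ := hph.exists_eq_mul_of_dvd hfh h
  have hcu : IsUnit c := (hfi p c hph hc hfc).resolve_left hpu
  refine ⟨hf0, hfu, hfh, fun g k hg hk hd => ?_⟩
  rw [hfc, hcu.mul_right_dvd] at hd ⊢
  rw [hcu.mul_right_dvd]
  exact hpp g k hg hk hd

variable {P : Set R}

lemma homog_of_mem_closure (hP : ∀ p ∈ P, KPrime 𝒜 p) {s : R}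
    (hs : s ∈ Submonoid.closure P) : Homog 𝒜 s := by
  induction hs using Submonoid.closure_induction with
  | mem p hp => exact (hP p hp).2.2.1
  | one => exact ⟨0, SetLike.one_mem_graded 𝒜⟩
  | mul s t _ _ hs ht => exact hs.mul ht

lemma closure_le_nonZeroDivisors (hzd : NoHomogZeroDivisors 𝒜) (hP : ∀ p ∈ P, KPrime 𝒜 p) :
    Submonoid.closure P ≤ nonZeroDivisors R :=
  Submonoid.closure_le.2 fun p hp => (hP p hp).2.2.1.mem_nonZeroDivisors hzd (hP p hp).1

/-- If no generator of `S` divides `f`, then elements of `S` are coprime to `f`. -/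
lemma dvd_of_dvd_mul_of_mem_closure (hzd : NoHomogZeroDivisors 𝒜)
    (hP : ∀ p ∈ P, KPrime 𝒜 p) {f : R} (hf : Homog 𝒜 f) (hfP : ∀ p ∈ P, ¬ p ∣ f) {s : R}
    (hs : s ∈ Submonoid.closure P) : ∀ c, Homog 𝒜 c → s ∣ f * c → s ∣ c := by
  induction hs using Submonoid.closure_induction with
  | mem p hp =>
    intro c hc h
    exact ((hP p hp).2.2.2 f c hf hc h).resolve_left (hfP p hp)
  | one => exact fun c _ _ => one_dvd c
  | mul s t hs ht ihs iht =>
    intro c hc h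
    obtain ⟨d, hd, rfl⟩ := (homog_of_mem_closure hP hs).exists_eq_mul_of_dvd hc
      (ihs c hc ((dvd_mul_right s t).trans h))
    refine mul_dvd_mul_left s (iht d hd ?_)
    obtain ⟨e, he⟩ := h
    refine ⟨e, ?_⟩
    apply (mul_cancel_left_mem_nonZeroDivisors (closure_le_nonZeroDivisors hzd hP hs)).1
    linear_combination he

/-- A factorization of `f * s` with `s ∈ S` comes from a factorization of `f`, by distributing the
prime factors of `s` over the two factors. -/
lemma exists_cancel_of_mem_closure (hzd : NoHomogZeroDivisors 𝒜)
    (hP : ∀ p ∈ P, KPrime 𝒜 p) {s : R} (hs : s ∈ Submonoid.closure P) :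
    ∀ f a b, Homog 𝒜 f → Homog 𝒜 a → Homog 𝒜 b → f * s = a * b →
      ∃ s₁ ∈ Submonoid.closure P, ∃ s₂ ∈ Submonoid.closure P, ∃ a' b',
        Homog 𝒜 a' ∧ Homog 𝒜 b' ∧ a = s₁ * a' ∧ b = s₂ * b' ∧ f = a' * b' := by
  induction hs using Submonoid.closure_induction with
  | mem p hp =>
    intro f a b hf ha hb h
    have hpS := Submonoid.subset_closure hp
    have hpn := closure_le_nonZeroDivisors hzd hP hpS
    obtain ⟨-, -, hph, hpp⟩ := hP p hp
    rcases hpp a b ha hb (h ▸ dvd_mul_left p f) with hd | hd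
    · obtain ⟨a', ha', rfl⟩ := hph.exists_eq_mul_of_dvd ha hd
      refine ⟨p, hpS, 1, one_mem _, a', b, ha', hb, rfl, (one_mul b).symm, ?_⟩
      apply (mul_cancel_left_mem_nonZeroDivisors hpn).1
      linear_combination h
    · obtain ⟨b', hb', rfl⟩ := hph.exists_eq_mul_of_dvd hb hd
      refine ⟨1, one_mem _, p, hpS, a, b', ha, hb', (one_mul a).symm, rfl, ?_⟩
      apply (mul_cancel_left_mem_nonZeroDivisors hpn).1
      linear_combination h
  | one =>
    intro f a b hf ha hb h
    exact ⟨1, one_mem _, 1, one_mem _, a, b, ha, hb, (one_mul a).symm, (one_mul b).symm,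
      by rw [← h, mul_one]⟩
  | mul s t hs ht ihs iht =>
    intro f a b hf ha hb h
    obtain ⟨t₁, ht₁, t₂, ht₂, a', b', ha', hb', rfl, rfl, h'⟩ :=
      iht (f * s) a b (hf.mul (homog_of_mem_closure hP hs)) ha hb (by rw [mul_assoc, h])
    obtain ⟨s₁, hs₁, s₂, hs₂, a'', b'', ha'', hb'', rfl, rfl, h''⟩ :=
      ihs f a' b' hf ha' hb' h'
    exact ⟨t₁ * s₁, mul_mem ht₁ hs₁, t₂ * s₂, mul_mem ht₂ hs₂, a'', b'', ha'', hb'',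
      by ring, by ring, h''⟩

/-- Homogeneous elements of the localization are the fractions of homogeneous elements; the degree
is recovered as a difference because every element of `S` is homogeneous. -/
lemma homog_loc_iff (hP : ∀ p ∈ P, KPrime 𝒜 p) {R' : Type*} [CommRing R'] [Algebra R R']
    {ℬ : K → AddSubgroup R'} (hℬ : LocGrading 𝒜 (Submonoid.closure P) R' ℬ) (x : R') :
    Homog ℬ x ↔ ∃ r s : R, Homog 𝒜 r ∧ s ∈ Submonoid.closure P ∧
      x * algebraMap R R' s = algebraMap R R' r := by
  constructor
  · rintro ⟨w, hw⟩
    obtain ⟨r, s, v, hs, -, hr, h⟩ := (hℬ w x).1 hw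
    exact ⟨r, s, ⟨_, hr⟩, hs, h⟩
  · rintro ⟨r, s, ⟨d, hd⟩, hs, h⟩
    obtain ⟨v, hv⟩ := homog_of_mem_closure hP hs
    exact ⟨d - v, (hℬ _ x).2 ⟨r, s, v, hs, hv, by rwa [add_sub_cancel], h⟩⟩

lemma homog_loc_prod (hP : ∀ p ∈ P, KPrime 𝒜 p) {R' : Type*} [CommRing R'] [Algebra R R']
    {ℬ : K → AddSubgroup R'} (hℬ : LocGrading 𝒜 (Submonoid.closure P) R' ℬ) (l : Multiset R')
    (hl : ∀ x ∈ l, Homog ℬ x) : Homog ℬ l.prod := by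
  refine Multiset.prod_induction (Homog ℬ) l (fun x y hx hy => ?_) ?_ hl
  · rw [homog_loc_iff hP hℬ] at hx hy ⊢
    obtain ⟨r, s, hr, hs, h⟩ := hx
    obtain ⟨r', s', hr', hs', h'⟩ := hy
    refine ⟨r * r', s * s', hr.mul hr', mul_mem hs hs', ?_⟩
    rw [map_mul, map_mul, ← h, ← h']
    ring
  · exact (homog_loc_iff hP hℬ 1).2
      ⟨1, 1, ⟨0, SetLike.one_mem_graded 𝒜⟩, one_mem _, one_mul _⟩

/-- The core of Nagata's argument: away from the generators of `S`, irreducible elements are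
prime as soon as the localization is factorially graded. -/
lemma kPrime_of_not_dvd (hzd : NoHomogZeroDivisors 𝒜) (hP : ∀ p ∈ P, KPrime 𝒜 p)
    {R' : Type*} [CommRing R'] [Algebra R R'] [IsLocalization (Submonoid.closure P) R']
    {ℬ : K → AddSubgroup R'} (hℬ : LocGrading 𝒜 (Submonoid.closure P) R' ℬ)
    (hfact : FactoriallyGraded ℬ) {f : R} (hf : KIrreducible 𝒜 f) (hfP : ∀ p ∈ P, ¬ p ∣ f) :
    KPrime 𝒜 f := by
  obtain ⟨hf0, hfu, hfh, hfi⟩ := hf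
  have hSn := closure_le_nonZeroDivisors hzd hP
  have hinj : Function.Injective (algebraMap R R') := IsLocalization.injective R' hSn
  have hSu : ∀ s ∈ Submonoid.closure P, IsUnit (algebraMap R R' s) := fun s hs =>
    IsLocalization.map_units R' (⟨s, hs⟩ : Submonoid.closure P)
  have hone : Homog 𝒜 (1 : R) := ⟨0, SetLike.one_mem_graded 𝒜⟩
  have hmap : ∀ g, Homog 𝒜 g → Homog ℬ (algebraMap R R' g) := fun g hg =>
    (homog_loc_iff hP hℬ _).2 ⟨g, 1, hg, one_mem _, by simp⟩
  -- divisibility by `f` descends from the localization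
  have hdesc : ∀ g, Homog 𝒜 g → algebraMap R R' f ∣ algebraMap R R' g → f ∣ g := by
    rintro g hg ⟨z, hz⟩
    obtain ⟨⟨c, t⟩, hct⟩ := IsLocalization.surj (Submonoid.closure P) z
    have hgt : g * t = f * c := by
      apply hinj
      rw [map_mul, map_mul, ← hct, hz, mul_assoc]
    obtain ⟨c', hc', hfc⟩ := hfh.exists_eq_mul_of_dvd
      (hg.mul (homog_of_mem_closure hP t.2)) ⟨c, hgt⟩
    obtain ⟨e, rfl⟩ := dvd_of_dvd_mul_of_mem_closure hzd hP hfh hfP t.2 c' hc'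
      ⟨g, by rw [← hfc, mul_comm]⟩
    refine ⟨e, ?_⟩
    apply (mul_cancel_left_mem_nonZeroDivisors (hSn t.2)).1
    linear_combination hfc
  have hfu' : ¬ IsUnit (algebraMap R R' f) := fun h =>
    hfu (isUnit_of_dvd_one (hdesc 1 hone h.dvd))
  obtain ⟨l, hl, hlf⟩ := hfact _ (hmap f hfh)
    (fun h => hf0 (hinj (h.trans (map_zero _).symm))) hfu'
  have hl0 : l ≠ 0 := by
    rintro rfl
    exact hfu' (by simp [← hlf])
  obtain ⟨q, hq⟩ := Multiset.exists_mem_of_ne_zero hl0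
  obtain ⟨m, rfl⟩ := Multiset.exists_cons_of_mem hq
  rw [Multiset.prod_cons] at hlf
  obtain ⟨-, hqu, hqh, hqp⟩ := hl q hq
  have hmh : Homog ℬ m.prod := homog_loc_prod hP hℬ m fun x hx =>
    (hl x (Multiset.mem_cons_of_mem hx)).2.2.1
  -- the cofactor of `q` is a unit
  have hmu : IsUnit m.prod := by
    obtain ⟨a, s, ha, hs, has⟩ := (homog_loc_iff hP hℬ q).1 hqh
    obtain ⟨b, t, hb, ht, hbt⟩ := (homog_loc_iff hP hℬ m.prod).1 hmh
    have hfst : f * (s * t) = a * b := by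
      apply hinj
      rw [map_mul, map_mul, map_mul, ← has, ← hbt, ← hlf]
      ring
    obtain ⟨s₁, hs₁, s₂, hs₂, a', b', ha', hb', rfl, rfl, h⟩ :=
      exists_cancel_of_mem_closure hzd hP (mul_mem hs ht) f a b hfh ha hb hfst
    rcases hfi a' b' ha' hb' h with hu | hu
    · refine absurd (isUnit_of_mul_isUnit_left (y := algebraMap R R' s) ?_) hqu
      rw [has, map_mul]
      exact (hSu s₁ hs₁).mul (hu.map _)
    · refine isUnit_of_mul_isUnit_left (y := algebraMap R R' t) ?_
      rw [hbt, map_mul]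
      exact (hSu s₂ hs₂).mul (hu.map _)
  refine ⟨hf0, hfu, hfh, fun g h hg hh hd => ?_⟩
  have hd' := map_dvd (algebraMap R R') hd
  rw [← hlf, hmu.mul_right_dvd, map_mul] at hd'
  refine (hqp _ _ (hmap g hg) (hmap h hh) hd').imp (fun h' => hdesc g hg ?_)
    (fun h' => hdesc h hh ?_)
  all_goals rwa [← hlf, hmu.mul_right_dvd]

end Nagata

/-- Lemma 2.3, after Nagata. Let `R` be `K`-graded without homogeneous
zero divisors such that every nonzero homogeneous non-unit is a product of `K`-irreducible
elements, and let `S` be a multiplicative system generated by `K`-prime elements. If the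
graded localization `S⁻¹R` is factorially `K`-graded, then so is `R`. -/
theorem statement_8 {K R : Type*} [AddCommGroup K] [DecidableEq K] [CommRing R]
    (𝒜 : K → AddSubgroup R) [GradedRing 𝒜]
    (hzd : NoHomogZeroDivisors 𝒜)
    (hirr : ∀ f : R, Homog 𝒜 f → f ≠ 0 → ¬IsUnit f →
      ∃ l : Multiset R, (∀ p ∈ l, KIrreducible 𝒜 p) ∧ l.prod = f)
    (S : Submonoid R) (P : Set R) (hP : ∀ p ∈ P, KPrime 𝒜 p)
    (hSP : S = Submonoid.closure P)
    (R' : Type*) [CommRing R'] [Algebra R R'] [IsLocalization S R']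
    (ℬ : K → AddSubgroup R') (hℬ : LocGrading 𝒜 S R' ℬ)
    (hfact : FactoriallyGraded ℬ) :
    FactoriallyGraded 𝒜 := by
  subst hSP
  intro f hf hf0 hfu
  obtain ⟨l, hl, hlf⟩ := hirr f hf hf0 hfu
  refine ⟨l, fun q hq => ?_, hlf⟩
  by_cases hex : ∃ p ∈ P, p ∣ q
  · obtain ⟨p, hp, hpq⟩ := hex
    exact kPrime_of_kPrime_dvd (hl q hq) (hP p hp) hpq
  · push Not at hex
    exact kPrime_of_not_dvd hzd hP hℬ hfact (hl q hq) hex
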